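/- For all integers B ≥ 0, m ≥ 0 and every real μ with 0 < μ < 1, the variance of the generalized binomial distribution is Σ_{j=0}^{2B+2m} j²·p_j(2B, μ, m) − (m + 2Bμ)² = 2Bμ(1−μ) + 2μ(1−μ)·m·(2B+m+1). -/

import Mathlib

open Finset

/-- The Jacobi polynomial `P_m^{(α,β)}(x)` for integer parameters `α, β`
(with `m+α ≥ 0` and `m+β ≥ 0` in the intended range), defined by
`P_m^{(α,β)}(x) = ∑_{s=0}^{m} C(m+α, m−s) C(m+β, s) ((x−1)/2)^s ((x+1)/2)^{m−s}`. -/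
noncomputable def jacobiP (m : ℕ) (α β : ℤ) (x : ℝ) : ℝ :=
  ∑ s ∈ Finset.range (m + 1),
    (((m + α).toNat.choose (m - s) : ℝ)) * (((m + β).toNat.choose s : ℝ)) *
      ((x - 1) / 2) ^ s * ((x + 1) / 2) ^ (m - s)

/-- The generalized binomial probability
`p_j(2B, μ, m) = (m!(2B+m)!)/(j!(2B+2m−j)!) μ^{j−m} (1−μ)^{2B+m−j} (P_m^{(j−m,2B+m−j)}(1−2μ))²`,
where the powers of `μ` and `1−μ` are integer (possibly negative) powers. -/
noncomputable def genBinomP (B m : ℕ) (μ : ℝ) (j : ℕ) : ℝ :=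
  ((m.factorial * (2 * B + m).factorial : ℕ) : ℝ)
      / ((j.factorial * (2 * B + 2 * m - j).factorial : ℕ) : ℝ)
    * μ ^ ((j : ℤ) - (m : ℤ)) * (1 - μ) ^ ((2 * B + m : ℤ) - (j : ℤ))
    * (jacobiP m ((j : ℤ) - (m : ℤ)) ((2 * B + m : ℤ) - (j : ℤ)) (1 - 2 * μ)) ^ 2

open Polynomial in
/-- The generating polynomial `(1 + (1-μ)X)^j (1 - μX)^(N-j)` of the (unnormalized)
Krawtchouk polynomials at the node `j`. -/
noncomputable def krawtchoukGen (μ : ℝ) (N j : ℕ) : ℝ[X] :=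
  (1 + C (1 - μ) * X) ^ j * (1 + C (-μ) * X) ^ (N - j)

/-- The value at `j` of the `m`-th Krawtchouk polynomial of order `N`. -/
noncomputable def krawtchouk (μ : ℝ) (N m j : ℕ) : ℝ :=
  (krawtchoukGen μ N j).coeff m

/-- The weight of `j` in the binomial distribution with parameters `N` and `μ`. -/
noncomputable def binomWeight (μ : ℝ) (N j : ℕ) : ℝ :=
  N.choose j * μ ^ j * (1 - μ) ^ (N - j)

open Polynomial in
theorem coeff_one_add_C_mul_X_pow (a : ℝ) (n k : ℕ) :
    ((1 + C a * X : ℝ[X]) ^ n).coeff k = n.choose k * a ^ k := by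
  have h : (1 + C a * X : ℝ[X]) ^ n = ((1 + X : ℝ[X]) ^ n).comp (C a * X) := by simp
  rw [h, comp_C_mul_X_coeff, coeff_one_add_X_pow]

theorem jacobiP_eq_krawtchouk (μ : ℝ) (m n j : ℕ) (hj : j ≤ n + m) :
    jacobiP m ((j : ℤ) - m) ((n : ℤ) - j) (1 - 2 * μ) = krawtchouk μ (n + m) m j := by
  have e1 : ((m : ℤ) + ((j : ℤ) - m)).toNat = j := by omega
  have e2 : ((m : ℤ) + ((n : ℤ) - j)).toNat = n + m - j := by omega
  rw [krawtchouk, krawtchoukGen, mul_comm (_ ^ j), Polynomial.coeff_mul,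
    Finset.Nat.sum_antidiagonal_eq_sum_range_succ_mk, jacobiP]
  refine Finset.sum_congr rfl fun s _ => ?_
  rw [coeff_one_add_C_mul_X_pow, coeff_one_add_C_mul_X_pow, e1, e2,
    show (1 - 2 * μ - 1) / 2 = -μ by ring, show (1 - 2 * μ + 1) / 2 = 1 - μ by ring]
  ring

open Polynomial in
theorem one_add_mul_derivative_pow (a : ℝ) (n : ℕ) :
    (1 + C a * X) * derivative ((1 + C a * X : ℝ[X]) ^ n)
      = C (n * a) * (1 + C a * X) ^ n := by
  cases n with
  | zero => simp
  | succ k =>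
    simp only [derivative_pow, derivative_add, derivative_mul, derivative_one, derivative_C,
      derivative_X, Nat.add_sub_cancel, C_mul, map_natCast]
    ring

open Polynomial in
/-- The differential equation of the generating polynomial. -/
theorem krawtchoukGen_derivative (μ : ℝ) {N j : ℕ} (hj : j ≤ N) :
    derivative (krawtchoukGen μ N j)
        + C (1 - 2 * μ) * (X * derivative (krawtchoukGen μ N j))
        - C (μ * (1 - μ)) * (X * (X * derivative (krawtchoukGen μ N j)))
      = C (j - N * μ) * krawtchoukGen μ N j
        - C (N * (μ * (1 - μ))) * (X * krawtchoukGen μ N j) := by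
  obtain ⟨k, rfl⟩ := Nat.exists_eq_add_of_le hj
  have h1 := one_add_mul_derivative_pow (1 - μ) j
  have h2 := one_add_mul_derivative_pow (-μ) k
  simp only [krawtchoukGen, Nat.add_sub_cancel_left, derivative_mul]
  generalize derivative ((1 + C (1 - μ) * X : ℝ[X]) ^ j) = D1 at *
  generalize derivative ((1 + C (-μ) * X : ℝ[X]) ^ k) = D2 at *
  simp only [C_mul, C_sub, C_neg, C_1, map_natCast, C_ofNat, Nat.cast_add, C_add] at *
  linear_combination (1 + -C μ * X) * (1 + -C μ * X) ^ k * h1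
    + (1 + (1 - C μ) * X) * (1 + (1 - C μ) * X) ^ j * h2

open Polynomial in
theorem coeff_X_mul_derivative (f : ℝ[X]) (n : ℕ) :
    (X * derivative f).coeff n = n * f.coeff n := by
  cases n with
  | zero => simp
  | succ k => rw [coeff_X_mul, coeff_derivative]; push_cast; ring

theorem krawtchouk_recurrence_zero (μ : ℝ) {N j : ℕ} (hj : j ≤ N) :
    j * krawtchouk μ N 0 j = krawtchouk μ N 1 j + N * μ * krawtchouk μ N 0 j := by
  have h := congrArg (fun f => Polynomial.coeff f 0) (krawtchoukGen_derivative μ hj)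
  simp only [Polynomial.coeff_sub, Polynomial.coeff_add, Polynomial.coeff_C_zero,
    Polynomial.coeff_derivative, Polynomial.mul_coeff_zero,
    Polynomial.coeff_X_zero] at h
  push_cast at h
  simp only [krawtchouk]
  linear_combination -h

/-- The three-term recurrence of the Krawtchouk polynomials. -/
theorem krawtchouk_recurrence_succ (μ : ℝ) {N j : ℕ} (hj : j ≤ N) (m : ℕ) :
    j * krawtchouk μ N (m + 1) j
      = (m + 2) * krawtchouk μ N (m + 2) j
        + ((1 - 2 * μ) * (m + 1) + N * μ) * krawtchouk μ N (m + 1) j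
        + μ * (1 - μ) * (N - m) * krawtchouk μ N m j := by
  have h := congrArg (fun f => Polynomial.coeff f (m + 1)) (krawtchoukGen_derivative μ hj)
  simp only [Polynomial.coeff_sub, Polynomial.coeff_add, Polynomial.coeff_C_mul,
    Polynomial.coeff_X_mul, coeff_X_mul_derivative, Polynomial.coeff_derivative] at h
  push_cast at h
  simp only [krawtchouk]
  linear_combination -h

open Polynomial in
theorem krawtchouk_orthogonality (μ : ℝ) (N m l : ℕ) :
    ∑ j ∈ Finset.range (N + 1), binomWeight μ N j * krawtchouk μ N m j * krawtchouk μ N l j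
      = if m = l then N.choose m * (μ * (1 - μ)) ^ m else 0 := by
  -- the inner variable is `C X`, the outer one is `X`
  have key : ∑ j ∈ Finset.range (N + 1),
      C (C (binomWeight μ N j) * krawtchoukGen μ N j) * (krawtchoukGen μ N j).map C
        = ((1 + C (C (μ * (1 - μ)) * X) * X : ℝ[X][X])) ^ N := by
    have e : (1 + C (C (μ * (1 - μ)) * X) * X : ℝ[X][X])
        = C (C μ * (1 + C (1 - μ) * X)) * (1 + C (C (1 - μ)) * X)
          + C (C (1 - μ) * (1 + C (-μ) * X)) * (1 + C (C (-μ)) * X) := by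
      simp only [C_mul, C_add, C_sub, C_neg, C_1]
      ring
    rw [e, add_pow]
    refine Finset.sum_congr rfl fun j _ => ?_
    simp only [krawtchoukGen, binomWeight, Polynomial.map_mul, Polynomial.map_pow,
      Polynomial.map_add, Polynomial.map_one, Polynomial.map_C, Polynomial.map_X,
      C_mul, C_pow, map_natCast, mul_pow]
    ring
  have h1 : ((1 + C (C (μ * (1 - μ)) * X) * X : ℝ[X][X]) ^ N).coeff l
      = C (N.choose l * (μ * (1 - μ)) ^ l) * X ^ l := by
    have h : (1 + C (C (μ * (1 - μ)) * X) * X : ℝ[X][X]) ^ N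
        = ((1 + X : ℝ[X][X]) ^ N).comp (C (C (μ * (1 - μ)) * X) * X) := by simp
    rw [h, comp_C_mul_X_coeff, coeff_one_add_X_pow, mul_pow]
    simp only [C_mul, C_pow, map_natCast, mul_assoc]
  have h2 := congrArg (fun f => (f.coeff l).coeff m) key
  simp only [h1, finsetSum_coeff, coeff_C_mul, coeff_map, coeff_mul_C, coeff_X_pow] at h2
  simp only [krawtchouk, h2]
  split_ifs with h
  · rw [h, mul_one]
  · rw [mul_zero]

/-- The second moment of the Krawtchouk weight, from the three-term recurrence. -/
theorem sum_sq_mul_krawtchouk_sq (μ : ℝ) (m n : ℕ) :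
    ∑ j ∈ Finset.range (n + m + 1),
        (j : ℝ) ^ 2 * (binomWeight μ (n + m) j * krawtchouk μ (n + m) m j ^ 2)
      = ((m + (n - m) * μ) ^ 2 + μ * (1 - μ) * ((m + 1) * n + (n + 1) * m))
        * ((n + m).choose m * (μ * (1 - μ)) ^ m) := by
  have ho := krawtchouk_orthogonality μ (n + m)
  cases m with
  | zero =>
    have h00 := ho 0 0
    have h01 := ho 0 1
    have h11 := ho 1 1
    simp only [if_true, zero_ne_one, if_false, Nat.choose_one_right, Nat.choose_zero_right]
      at h00 h01 h11
    calc _ = ∑ j ∈ Finset.range (n + 0 + 1),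
          (binomWeight μ (n + 0) j * krawtchouk μ (n + 0) 1 j * krawtchouk μ (n + 0) 1 j
          + 2 * (n * μ)
            * (binomWeight μ (n + 0) j * krawtchouk μ (n + 0) 0 j * krawtchouk μ (n + 0) 1 j)
          + (n * μ) ^ 2
            * (binomWeight μ (n + 0) j * krawtchouk μ (n + 0) 0 j * krawtchouk μ (n + 0) 0 j)) := by
          refine Finset.sum_congr rfl fun j hj => ?_
          have hr := krawtchouk_recurrence_zero (N := n + 0) μ (Finset.mem_range_succ_iff.mp hj)
          rw [show ∀ a b c : ℝ, a ^ 2 * (b * c ^ 2) = b * (a * c) ^ 2 by intros; ring, hr]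
          push_cast
          ring
      _ = _ := by
          simp only [Finset.sum_add_distrib, ← Finset.mul_sum, h00, h01, h11]
          simp
          ring
  | succ k =>
    set N := n + (k + 1) with hN
    have c1 : (N.choose (k + 2) : ℝ) * (k + 2) = N.choose (k + 1) * n := by
      have h := Nat.choose_succ_right_eq N (k + 1)
      rw [show N - (k + 1) = n by omega] at h
      exact_mod_cast h
    have c2 : (N.choose (k + 1) : ℝ) * (k + 1) = N.choose k * (n + 1) := by
      have h := Nat.choose_succ_right_eq N k
      rw [show N - k = n + 1 by omega] at h
      exact_mod_cast h
    set A : ℝ := k + 2 with hA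
    set M : ℝ := (1 - 2 * μ) * (k + 1) + N * μ with hM
    set D : ℝ := μ * (1 - μ) * (N - k) with hD
    have hNr : (N : ℝ) = n + (k + 1) := by rw [hN]; push_cast; ring
    calc _ = ∑ j ∈ Finset.range (N + 1),
          (A ^ 2 * (binomWeight μ N j * krawtchouk μ N (k + 2) j * krawtchouk μ N (k + 2) j)
          + M ^ 2 * (binomWeight μ N j * krawtchouk μ N (k + 1) j * krawtchouk μ N (k + 1) j)
          + D ^ 2 * (binomWeight μ N j * krawtchouk μ N k j * krawtchouk μ N k j)
          + 2 * A * M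
            * (binomWeight μ N j * krawtchouk μ N (k + 2) j * krawtchouk μ N (k + 1) j)
          + 2 * A * D * (binomWeight μ N j * krawtchouk μ N (k + 2) j * krawtchouk μ N k j)
          + 2 * M * D
            * (binomWeight μ N j * krawtchouk μ N (k + 1) j * krawtchouk μ N k j)) := by
          refine Finset.sum_congr rfl fun j hj => ?_
          have hr := krawtchouk_recurrence_succ μ (Finset.mem_range_succ_iff.mp hj) k
          rw [show ∀ a b c : ℝ, a ^ 2 * (b * c ^ 2) = b * (a * c) ^ 2 by intros; ring, hr]
          ring
      _ = _ := by
          simp only [Finset.sum_add_distrib, ← Finset.mul_sum, ho, if_true,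
            show k + 2 ≠ k + 1 by omega, show k + 2 ≠ k by omega, show k + 1 ≠ k by omega,
            if_false]
          rw [hM, hD, hNr]
          push_cast
          linear_combination A * (μ * (1 - μ)) ^ (k + 2) * c1
            - (n + 1) * (μ * (1 - μ)) ^ (k + 2) * c2

theorem genBinomP_eq_krawtchouk (B m j : ℕ) (μ : ℝ) (h0 : 0 < μ) (h1 : μ < 1)
    (hj : j ≤ 2 * B + m + m) :
    genBinomP B m μ j
      = binomWeight μ (2 * B + m + m) j * krawtchouk μ (2 * B + m + m) m j ^ 2
        / ((2 * B + m + m).choose m * (μ * (1 - μ)) ^ m) := by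
  have hq : 0 < 1 - μ := by linarith
  have hJ := jacobiP_eq_krawtchouk μ m (2 * B + m) j hj
  push_cast at hJ
  have e1 : μ ^ ((j : ℤ) - m) = μ ^ j / μ ^ m := by
    rw [zpow_sub₀ h0.ne', zpow_natCast, zpow_natCast]
  have e2 : (1 - μ) ^ ((2 * B + m : ℤ) - j)
      = (1 - μ) ^ (2 * B + m + m - j) / (1 - μ) ^ m := by
    rw [← zpow_natCast, ← zpow_natCast, ← zpow_sub₀ hq.ne']
    congr 1
    omega
  rw [genBinomP, hJ, e1, e2, binomWeight, Nat.cast_choose ℝ hj,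
    Nat.cast_choose ℝ (show m ≤ 2 * B + m + m by omega),
    show 2 * B + 2 * m = 2 * B + m + m by ring, Nat.add_sub_cancel]
  push_cast
  field_simp
  rw [mul_pow, mul_comm]

/-- The variance of the generalized binomial distribution:
`Var(X) = 2Bμ(1−μ) + 2μ(1−μ)m(2B+m+1)`. -/
theorem genBinomP_variance (B m : ℕ) (μ : ℝ) (h0 : 0 < μ) (h1 : μ < 1) :
    (∑ j ∈ Finset.range (2 * B + 2 * m + 1), (j : ℝ) ^ 2 * genBinomP B m μ j)
        - ((m : ℝ) + 2 * B * μ) ^ 2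
      = 2 * B * μ * (1 - μ) + 2 * μ * (1 - μ) * m * (2 * B + m + 1) := by
  have hq : 0 < 1 - μ := by linarith
  have hc : (0 : ℝ) < (2 * B + m + m).choose m :=
    Nat.cast_pos.mpr (Nat.choose_pos (by omega))
  have hne : ((2 * B + m + m).choose m * (μ * (1 - μ)) ^ m : ℝ) ≠ 0 := by positivity
  have hs : ∑ j ∈ Finset.range (2 * B + m + m + 1), (j : ℝ) ^ 2 * genBinomP B m μ j
      = (m + ((2 * B + m : ℕ) - m) * μ) ^ 2
        + μ * (1 - μ) * ((m + 1) * (2 * B + m : ℕ) + ((2 * B + m : ℕ) + 1) * m) := by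
    rw [← mul_div_cancel_right₀ (_ + _) hne, ← sum_sq_mul_krawtchouk_sq, Finset.sum_div]
    refine Finset.sum_congr rfl fun j hj => ?_
    rw [genBinomP_eq_krawtchouk B m j μ h0 h1 (Finset.mem_range_succ_iff.mp hj), ← mul_div_assoc]
  rw [show 2 * B + 2 * m + 1 = 2 * B + m + m + 1 by ring, hs]
  push_cast
  ring
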